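/- arXiv:0901.1632 — 9 statements merged into one kernel-verified Lean document; each statement's English description precedes it below -/
import Mathlib

section
/- The motivic May differential squares to zero: for every polynomial p in B, d(d(p)) = 0. -/
open MvPolynomial Finset

/-- The polynomial ring over `ZMod 2` on a variable `τ` (indexed by `none`) and
variables `h_{i,j}` for integers `i ≥ 1`, `j ≥ 0`; the variable `h_{i,j}` is
indexed by `some (i - 1, j)`.  Its cohomology with respect to the May
differential computes the `E₂`-term of the motivic May spectral sequence. -/
abbrev MayB : Type := MvPolynomial (Option (ℕ × ℕ)) (ZMod 2)

/-- The polynomial generator `τ`. -/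
noncomputable def tau : MayB := X none

/-- The polynomial generator `h_{i,j}` (meaningful for `i ≥ 1`, `j ≥ 0`). -/
noncomputable def h (i j : ℕ) : MayB := X (some (i - 1, j))

/-!
In characteristic two the cross terms `2 * d a * d b` in `d (d (a * b))` vanish, so `d ∘ d` is
itself a derivation and it suffices to evaluate it on generators. On `h_{i,j}` the Leibniz rule
yields the sum of `h_{a,j} * h_{b,a+j} * h_{c,a+b+j}` over all `a, b, c ≥ 1` with `a + b + c = i`
twice, once from applying `d` to the second factor of each product and once from applying it to
the first; the two copies cancel.
-/

section CharTwo

variable {R A : Type*} [CommSemiring R] [CommSemiring A] [Algebra R A] [CharP A 2]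

/-- The square `d ∘ d` of a derivation `d` of an algebra of characteristic two, which is again a
derivation; this reduces the vanishing of `d ∘ d` to generators. -/
def sqDerivation (d : Derivation R A A) : Derivation R A A where
  toLinearMap := (d : A →ₗ[R] A) ∘ₗ (d : A →ₗ[R] A)
  map_one_eq_zero' := by simp
  leibniz' a b := by
    have cross : d a * d b + d b * d a = 0 := by
      rw [mul_comm (d b), CharTwo.add_self_eq_zero]
    calc d (d (a * b))
        = a * d (d b) + b * d (d a) + (d a * d b + d b * d a) := by
          simp only [Derivation.leibniz, map_add, smul_eq_mul]
          ring
      _ = a * d (d b) + b * d (d a) := by rw [cross, add_zero]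

theorem sqDerivation_apply (d : Derivation R A A) (a : A) : sqDerivation d a = d (d a) :=
  rfl

theorem derivation_sq_eq_zero_of_adjoin_eq_top (d : Derivation R A A) {s : Set A}
    (hs : Algebra.adjoin R s = ⊤) (hd : ∀ a ∈ s, d (d a) = 0) (a : A) : d (d a) = 0 := by
  have sq_eq_zero : sqDerivation d = 0 := Derivation.ext_of_adjoin_eq_top s hs hd
  rw [← sqDerivation_apply, sq_eq_zero, Derivation.zero_apply]

end CharTwo

theorem sum_Icc_split_right_eq_split_left {M : Type*} [AddCommMonoid M] (f : ℕ → ℕ → ℕ → M)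
    (n : ℕ) :
    ∑ k ∈ Icc 1 (n - 1), ∑ l ∈ Icc 1 (n - k - 1), f k l (n - k - l) =
      ∑ k ∈ Icc 1 (n - 1), ∑ l ∈ Icc 1 (k - 1), f l (k - l) (n - k) := by
  rw [sum_sigma', sum_sigma']
  refine sum_bij' (fun x _ => ⟨x.1 + x.2, x.1⟩) (fun x _ => ⟨x.2, x.1 - x.2⟩) ?_ ?_ ?_ ?_ ?_ <;>
    rintro ⟨k, l⟩ hkl <;> simp only [mem_sigma, mem_Icc] at hkl ⊢
  · omega
  · omega
  · rw [Nat.add_sub_cancel_left]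
  · rw [Nat.add_sub_cancel' (by omega)]
  · rw [Nat.add_sub_cancel_left, Nat.sub_sub]

section MayDifferential

variable {R A : Type*} [CommSemiring R] [CommSemiring A] [Algebra R A]
  (d : Derivation R A A) {x : ℕ → ℕ → A}

theorem may_differential_sq_generator
    (hx : ∀ i j : ℕ, 1 ≤ i → d (x i j) = ∑ k ∈ Icc 1 (i - 1), x k j * x (i - k) (k + j))
    {i : ℕ} (hi : 1 ≤ i) (j : ℕ) :
    d (d (x i j)) =
      2 * ∑ k ∈ Icc 1 (i - 1), ∑ l ∈ Icc 1 (k - 1),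
        x l j * x (k - l) (l + j) * x (i - k) (k + j) := by
  have split_right : ∑ k ∈ Icc 1 (i - 1), x k j * d (x (i - k) (k + j)) =
      ∑ k ∈ Icc 1 (i - 1), ∑ l ∈ Icc 1 (k - 1),
        x l j * x (k - l) (l + j) * x (i - k) (k + j) := by
    calc ∑ k ∈ Icc 1 (i - 1), x k j * d (x (i - k) (k + j))
        = ∑ k ∈ Icc 1 (i - 1), ∑ l ∈ Icc 1 (i - k - 1),
            x k j * x l (k + j) * x (i - k - l) (k + l + j) := by
          refine sum_congr rfl fun k hk => ?_
          have hik : 1 ≤ i - k := by have := mem_Icc.mp hk; omega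
          rw [hx (i - k) (k + j) hik, mul_sum]
          refine sum_congr rfl fun l _ => ?_
          rw [mul_assoc, Nat.add_left_comm, Nat.add_assoc]
      _ = ∑ k ∈ Icc 1 (i - 1), ∑ l ∈ Icc 1 (k - 1),
            x l j * x (k - l) (l + j) * x (i - k) (l + (k - l) + j) :=
          sum_Icc_split_right_eq_split_left
            (fun a b c => x a j * x b (a + j) * x c (a + b + j)) i
      _ = _ := by
          refine sum_congr rfl fun k _ => sum_congr rfl fun l hl => ?_
          have hlk : l ≤ k := by have := mem_Icc.mp hl; omega
          rw [Nat.add_sub_cancel' hlk]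
  have split_left : ∑ k ∈ Icc 1 (i - 1), x (i - k) (k + j) * d (x k j) =
      ∑ k ∈ Icc 1 (i - 1), ∑ l ∈ Icc 1 (k - 1),
        x l j * x (k - l) (l + j) * x (i - k) (k + j) := by
    refine sum_congr rfl fun k hk => ?_
    rw [hx k j (mem_Icc.mp hk).1, mul_comm, sum_mul]
  simp only [hx i j hi, map_sum, Derivation.leibniz, smul_eq_mul, sum_add_distrib, split_right,
    split_left, two_mul]

theorem motivic_may_differential_sq_zero_general [CharP A 2] {s : Set A}
    (hgen : Algebra.adjoin R (s ∪ Set.image2 x (Set.Ici 1) Set.univ) = ⊤)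
    (hs : ∀ a ∈ s, d a = 0)
    (hx : ∀ i j : ℕ, 1 ≤ i → d (x i j) = ∑ k ∈ Icc 1 (i - 1), x k j * x (i - k) (k + j))
    (p : A) : d (d p) = 0 := by
  refine derivation_sq_eq_zero_of_adjoin_eq_top d hgen ?_ p
  rintro a (ha | ⟨i, hi, j, -, rfl⟩)
  · rw [hs a ha, map_zero]
  · rw [may_differential_sq_generator d hx hi, CharTwo.two_eq_zero, zero_mul]

end MayDifferential

theorem adjoin_tau_h_eq_top :
    Algebra.adjoin (ZMod 2) ({tau} ∪ Set.image2 h (Set.Ici 1) Set.univ) = ⊤ := by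
  rw [eq_top_iff, ← adjoin_range_X]
  apply Algebra.adjoin_mono
  rintro _ ⟨_ | ⟨i, j⟩, rfl⟩
  · exact Or.inl rfl
  · exact Or.inr ⟨i + 1, Nat.le_add_left 1 i, j, Set.mem_univ j, rfl⟩

/-- The motivic May differential squares to zero. -/
theorem motivic_may_differential_sq_zero (d : Derivation (ZMod 2) MayB MayB)
    (htau : d tau = 0)
    (hh : ∀ i j : ℕ, 1 ≤ i →
      d (h i j) = ∑ k ∈ Finset.Icc 1 (i - 1), h k j * h (i - k) (k + j))
    (p : MayB) : d (d p) = 0 := by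
  have htau' : ∀ a ∈ ({tau} : Set MayB), d a = 0 := by simpa only [Set.mem_singleton_iff, forall_eq]
  exact motivic_may_differential_sq_zero_general d adjoin_tau_h_eq_top htau' hh p
end

section
/- For every j ≥ 0, the element h_j(1) := h_{2,j}·h_{2,j+1} + h_{1,j+1}·h_{3,j} of B is a cocycle: d(h_{2,j}·h_{2,j+1} + h_{1,j+1}·h_{3,j}) = 0. (For j = 0, 1, 2 these are the classes h₀(1), h₁(1), h₂(1) appearing as generators of the E₂-term of the motivic May spectral sequence.) -/
open MvPolynomial Finset

/-!
Put `h_{i,j}` in position `(j, i + j)` of a strictly upper triangular matrix `M`, so that the May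
formula reads `d M = M ^ 2`. Up to a sign, `h_j(1)` is the minor of `M` on rows `j, j + 1` and
columns `j + 2, j + 3`. The diagonal and the antidiagonal product of this minor have the same
differential `h_{1,j} h_{1,j+1} h_{2,j+1} + h_{2,j} h_{1,j+1} h_{1,j+2}`. Hence the minor is a
cocycle over any commutative ring, and characteristic two only turns its minus sign into a plus.
-/

/-- The derivation `D` acts on the family `x` by the formula for the May differential, with `x i j`
in the role of `h_{i,j}`. Only the indices `i ≥ 1` carry meaning, so `x 0 j` is unconstrained. -/
def IsMayDifferential {R A : Type*} [CommSemiring R] [CommSemiring A] [Algebra R A]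
    (D : Derivation R A A) (x : ℕ → ℕ → A) : Prop :=
  ∀ i j : ℕ, 1 ≤ i → D (x i j) = ∑ k ∈ Icc 1 (i - 1), x k j * x (i - k) (k + j)

namespace IsMayDifferential

variable {R A : Type*} [CommSemiring R] [CommSemiring A] [Algebra R A]
  {D : Derivation R A A} {x : ℕ → ℕ → A}

theorem apply_one (hD : IsMayDifferential D x) (j : ℕ) : D (x 1 j) = 0 := by
  simpa using hD 1 j le_rfl

theorem apply_two (hD : IsMayDifferential D x) (j : ℕ) :
    D (x 2 j) = x 1 j * x 1 (j + 1) := by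
  simpa [add_comm] using hD 2 j one_le_two

theorem apply_three (hD : IsMayDifferential D x) (j : ℕ) :
    D (x 3 j) = x 1 j * x 2 (j + 1) + x 2 j * x 1 (j + 2) := by
  simpa [sum_Icc_succ_top, add_comm] using hD 3 j (by decide)

end IsMayDifferential

theorem motivic_may_hj1_cocycle_general {R A : Type*} [CommSemiring R] [CommRing A] [Algebra R A]
    {D : Derivation R A A} {x : ℕ → ℕ → A} (hD : IsMayDifferential D x) (j : ℕ) :
    D (x 2 j * x 2 (j + 1) - x 1 (j + 1) * x 3 j) = 0 := by
  have diagonal : D (x 2 j * x 2 (j + 1)) =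
      x 1 j * x 1 (j + 1) * x 2 (j + 1) + x 2 j * x 1 (j + 1) * x 1 (j + 2) := by
    simp only [D.leibniz, hD.apply_two, smul_eq_mul]
    ring
  have antidiagonal : D (x 1 (j + 1) * x 3 j) =
      x 1 j * x 1 (j + 1) * x 2 (j + 1) + x 2 j * x 1 (j + 1) * x 1 (j + 2) := by
    simp only [D.leibniz, hD.apply_one, hD.apply_three, smul_eq_mul]
    ring
  rw [map_sub, diagonal, antidiagonal, sub_self]

/-- For every `j ≥ 0`, the element `h_j(1) = h_{2,j} h_{2,j+1} + h_{1,j+1} h_{3,j}`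
is a cocycle for the motivic May differential. -/
theorem motivic_may_hj1_cocycle (d : Derivation (ZMod 2) MayB MayB)
    (htau : d tau = 0)
    (hh : ∀ i j : ℕ, 1 ≤ i →
      d (h i j) = ∑ k ∈ Finset.Icc 1 (i - 1), h k j * h (i - k) (k + j))
    (j : ℕ) :
    d (h 2 j * h 2 (j + 1) + h 1 (j + 1) * h 3 j) = 0 := by
  rw [← CharTwo.sub_eq_add]
  exact motivic_may_hj1_cocycle_general hh j
end

section
/- For every j ≥ 0, the element h_{1,j+2}·(h_{2,j}·h_{2,j+1} + h_{1,j+1}·h_{3,j}) + h_{1,j}·h_{2,j+1}² of B lies in the image of d. (For j = 0 this is the relation h₂·h₀(1) = h₀·b₂₁, and for j = 1 the relation h₃·h₁(1) = h₁·b₂₂, in the E₂-term of the motivic May spectral sequence.) -/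
open MvPolynomial Finset

section MayDerivation

variable {R A : Type*} [CommSemiring R] [CommSemiring A] [Algebra R A]

/-- The May differential formula for a derivation `d` on a commutative algebra and a family
`a i j` of its elements in the role of the generators `h_{i,j}`. Since these exist only for
`i ≥ 1`, the entries `a 0 j` are junk and nothing is required of them. -/
def IsMayDerivation (d : Derivation R A A) (a : ℕ → ℕ → A) : Prop :=
  ∀ i j : ℕ, 1 ≤ i → d (a i j) = ∑ k ∈ Icc 1 (i - 1), a k j * a (i - k) (k + j)

variable {d : Derivation R A A} {a : ℕ → ℕ → A}

theorem IsMayDerivation.apply_two (hd : IsMayDerivation d a) (j : ℕ) :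
    d (a 2 j) = a 1 j * a 1 (j + 1) := by
  simpa [add_comm 1 j] using hd 2 j one_le_two

theorem IsMayDerivation.apply_three (hd : IsMayDerivation d a) (j : ℕ) :
    d (a 3 j) = a 1 j * a 2 (j + 1) + a 2 j * a 1 (j + 2) := by
  simpa [sum_Icc_succ_top, add_comm _ j] using hd 3 j (by norm_num)

theorem motivic_may_relation_h2_h01_general (hd : IsMayDerivation d a) (j : ℕ) :
    d (a 2 (j + 1) * a 3 j) =
      a 1 (j + 2) * (a 2 j * a 2 (j + 1) + a 1 (j + 1) * a 3 j) + a 1 j * a 2 (j + 1) ^ 2 :=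
  calc
    d (a 2 (j + 1) * a 3 j) = a 2 (j + 1) * d (a 3 j) + a 3 j * d (a 2 (j + 1)) :=
      d.leibniz _ _
    _ = a 2 (j + 1) * (a 1 j * a 2 (j + 1) + a 2 j * a 1 (j + 2)) +
          a 3 j * (a 1 (j + 1) * a 1 (j + 2)) := by
      rw [hd.apply_three, hd.apply_two]
    _ = a 1 (j + 2) * (a 2 j * a 2 (j + 1) + a 1 (j + 1) * a 3 j) + a 1 j * a 2 (j + 1) ^ 2 := by
      ring

end MayDerivation

/-- For every `j ≥ 0`, the element
`h_{1,j+2} (h_{2,j} h_{2,j+1} + h_{1,j+1} h_{3,j}) + h_{1,j} h_{2,j+1}^2`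
lies in the image of the motivic May differential. -/
theorem motivic_may_relation_h2_h01 (d : Derivation (ZMod 2) MayB MayB)
    (htau : d tau = 0)
    (hh : ∀ i j : ℕ, 1 ≤ i →
      d (h i j) = ∑ k ∈ Finset.Icc 1 (i - 1), h k j * h (i - k) (k + j))
    (j : ℕ) :
    ∃ q : MayB, d q =
      h 1 (j + 2) * (h 2 j * h 2 (j + 1) + h 1 (j + 1) * h 3 j)
        + h 1 j * (h 2 (j + 1)) ^ 2 :=
  ⟨h 2 (j + 1) * h 3 j, motivic_may_relation_h2_h01_general hh j⟩
end

section
/- The element h_{2,0}²·h_{2,2}² + h_{1,0}²·h_{3,1}² + h_{1,3}²·h_{3,0}² of B lies in the image of d. (This is the relation b₂₀·b₂₂ = h₀²·b₃₁ + h₃²·b₃₀ in the E₂-term of the motivic May spectral sequence.) -/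
open MvPolynomial Finset

/-! Arrange the generators as a strictly upper triangular matrix, with `h_{i,j}` in position
`(j, i + j)`.  The May differential then reads `d H = H * H`, so that `d (d H)` is twice `H ^ 3` and
hence vanishes in characteristic two.  Consequently `d (x * d x) = (d x) ^ 2` for every generator
`x`, and by additivity of the Frobenius `(d x) ^ 2` is the sum of the squares of the terms of `d x`.
The relation is the case `x = h_{4,0}`. -/

section MaurerCartan

variable {R A ι : Type*} [CommSemiring R] [CommSemiring A] [Algebra R A]
  [Preorder ι] [LocallyFiniteOrder ι]

/-- The Maurer–Cartan equation `d H = H * H` for a matrix `H` indexed by a locally finite order.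
Only the entries strictly above the diagonal are constrained, and only they enter the product; the
sign is irrelevant in characteristic two, where the equation is used. -/
def IsMaurerCartan (d : Derivation R A A) (H : ι → ι → A) : Prop :=
  ∀ a b, a < b → d (H a b) = ∑ c ∈ Ioo a b, H a c * H c b

namespace IsMaurerCartan

variable {d : Derivation R A A} {H : ι → ι → A} {a b : ι}

theorem map_map_eq_zero [CharP A 2] (hH : IsMaurerCartan d H) (hab : a < b) :
    d (d (H a b)) = 0 := by
  have left_factor : ∑ c ∈ Ioo a b, d (H a c) * H c b =
      ∑ c ∈ Ioo a b, ∑ e ∈ Ioo a c, H a e * H e c * H c b :=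
    sum_congr rfl fun c hc ↦ by rw [hH a c (mem_Ioo.1 hc).1, sum_mul]
  have right_factor : ∑ e ∈ Ioo a b, H a e * d (H e b) =
      ∑ e ∈ Ioo a b, ∑ c ∈ Ioo e b, H a e * H e c * H c b :=
    sum_congr rfl fun e he ↦ by simp only [hH e b (mem_Ioo.1 he).2, mul_sum, mul_assoc]
  have swap : ∑ c ∈ Ioo a b, ∑ e ∈ Ioo a c, H a e * H e c * H c b =
      ∑ e ∈ Ioo a b, ∑ c ∈ Ioo e b, H a e * H e c * H c b :=
    sum_comm' fun c e ↦ by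
      simp only [mem_Ioo]
      exact ⟨fun ⟨⟨_, hcb⟩, hae, hec⟩ ↦ ⟨⟨hec, hcb⟩, hae, hec.trans hcb⟩,
        fun ⟨⟨hec, hcb⟩, hae, _⟩ ↦ ⟨⟨hae.trans hec, hcb⟩, hae, hec⟩⟩
  calc d (d (H a b))
      = ∑ c ∈ Ioo a b, H a c * d (H c b) + ∑ c ∈ Ioo a b, d (H a c) * H c b := by
        simp only [hH a b hab, map_sum, Derivation.leibniz, smul_eq_mul, sum_add_distrib,
          mul_comm (d _)]
    _ = 0 := by rw [left_factor, right_factor, swap, CharTwo.add_self_eq_zero]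

theorem map_mul_map_self [CharP A 2] (hH : IsMaurerCartan d H) (hab : a < b) :
    d (H a b * d (H a b)) = ∑ c ∈ Ioo a b, H a c ^ 2 * H c b ^ 2 := by
  calc d (H a b * d (H a b)) = d (H a b) ^ 2 := by
        rw [Derivation.leibniz, hH.map_map_eq_zero hab, smul_zero, zero_add, smul_eq_mul, sq]
    _ = ∑ c ∈ Ioo a b, H a c ^ 2 * H c b ^ 2 := by
        simp only [hH a b hab, CharTwo.sum_sq, mul_pow]

end IsMaurerCartan

end MaurerCartan

theorem sum_Ioo_add_right_eq_sum_Icc {M : Type*} [AddCommMonoid M] (f : ℕ → M) (i j : ℕ) :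
    ∑ c ∈ Ioo j (i + j), f c = ∑ k ∈ Icc 1 (i - 1), f (k + j) := by
  have shift : Ioo j (i + j) = (Ioo 0 i).map (addRightEmbedding j) := by
    rw [map_add_right_Ioo, zero_add]
  have interval : Ioo 0 i = Icc 1 (i - 1) := by
    ext k
    simp only [mem_Ioo, mem_Icc]
    omega
  rw [shift, sum_map, interval]
  rfl

section MayDifferential

variable {R A : Type*} [CommSemiring R] [CommSemiring A] [Algebra R A]
  {d : Derivation R A A} {x : ℕ → ℕ → A}

theorem isMaurerCartan_of_may_differential
    (hx : ∀ i j, 1 ≤ i → d (x i j) = ∑ k ∈ Icc 1 (i - 1), x k j * x (i - k) (k + j)) :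
    IsMaurerCartan d fun a b ↦ x (b - a) a := by
  intro a b hab
  obtain ⟨i, rfl⟩ := Nat.exists_eq_add_of_le' hab.le
  simp only [sum_Ioo_add_right_eq_sum_Icc, Nat.add_sub_cancel, Nat.add_sub_add_right]
  exact hx i a (by omega)

theorem motivic_may_relation_b20_b22_general [CharP A 2]
    (hx : ∀ i j, 1 ≤ i → d (x i j) = ∑ k ∈ Icc 1 (i - 1), x k j * x (i - k) (k + j))
    {i : ℕ} (hi : 1 ≤ i) (j : ℕ) :
    d (x i j * d (x i j)) = ∑ k ∈ Icc 1 (i - 1), x k j ^ 2 * x (i - k) (k + j) ^ 2 := by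
  have relation := (isMaurerCartan_of_may_differential hx).map_mul_map_self
    (Nat.lt_add_of_pos_left hi : j < i + j)
  simpa only [sum_Ioo_add_right_eq_sum_Icc, Nat.add_sub_cancel, Nat.add_sub_add_right]
    using relation

end MayDifferential

/-- The element `h_{2,0}^2 h_{2,2}^2 + h_{1,0}^2 h_{3,1}^2 + h_{1,3}^2 h_{3,0}^2`
lies in the image of the motivic May differential
(the relation `b20 * b22 = h0^2 * b31 + h3^2 * b30`). -/
theorem motivic_may_relation_b20_b22 (d : Derivation (ZMod 2) MayB MayB)
    (htau : d tau = 0)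
    (hh : ∀ i j : ℕ, 1 ≤ i →
      d (h i j) = ∑ k ∈ Finset.Icc 1 (i - 1), h k j * h (i - k) (k + j)) :
    ∃ q : MayB, d q =
      (h 2 0) ^ 2 * (h 2 2) ^ 2 + (h 1 0) ^ 2 * (h 3 1) ^ 2
        + (h 1 3) ^ 2 * (h 3 0) ^ 2 := by
  refine ⟨h 4 0 * d (h 4 0), ?_⟩
  rw [motivic_may_relation_b20_b22_general hh (by norm_num) 0]
  simp only [sum_Icc_succ_top, Nat.reduceAdd, Nat.reduceSub, Nat.reduceLeDiff, Icc_self,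
    sum_singleton]
  ring
end

section
/- The element h_{2,2}²·(h_{2,0}·h_{2,1} + h_{1,1}·h_{3,0}) + h_{1,0}·h_{1,2}·h_{3,1}² of B lies in the image of d. (This is the relation b₂₂·h₀(1) = h₀·h₂·b₃₁ in the E₂-term of the motivic May spectral sequence.) -/
open MvPolynomial Finset

/-!
The point is that `h_1(1) = h_{2,1} h_{2,2} + h_{1,2} h_{3,1}` is a cycle, so that
`d(h_{4,0} h_1(1)) = (h_{1,0} h_{3,1} + h_{2,0} h_{2,2} + h_{3,0} h_{1,3}) h_1(1)`.
This contains the summands `h_{1,0} h_{1,2} h_{3,1}^2` and `h_{2,2}^2 h_{2,0} h_{2,1}` of the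
relation. Adding `d(h_{3,0} h_{3,1} h_{2,2})` supplies the remaining summand
`h_{2,2}^2 h_{1,1} h_{3,0}`, and all other terms occur twice.
-/

section MayFamily

variable {R A : Type*} [CommSemiring R] [CommRing A] [Algebra R A]

/-- A family `x i j` of ring elements on which the derivation `d` is given by May's formula
`d x_{i,j} = ∑ x_{k,j} x_{i-k,k+j}`, the sum being over `0 < k < i`; the generators `h_{i,j}` of
the May complex are the motivating example. Nothing is required of the entries `x 0 j`. -/
def IsMayFamily (d : Derivation R A A) (x : ℕ → ℕ → A) : Prop :=
  ∀ i j : ℕ, 1 ≤ i → d (x i j) = ∑ k ∈ Icc 1 (i - 1), x k j * x (i - k) (k + j)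

/-- May's element `h_j(1)`, which in characteristic two is the minor on rows `j, j + 1` and
columns `j + 2, j + 3` of the strictly upper triangular matrix with entry `x_{l-k,k}` in position
`(k, l)`. -/
def hOne (x : ℕ → ℕ → A) (j : ℕ) : A :=
  x 2 j * x 2 (j + 1) + x 1 (j + 1) * x 3 j

namespace IsMayFamily

variable {d : Derivation R A A} {x : ℕ → ℕ → A}

lemma map_one (hx : IsMayFamily d x) (j : ℕ) : d (x 1 j) = 0 := by
  simp [hx 1 j le_rfl]

lemma map_two (hx : IsMayFamily d x) (j : ℕ) : d (x 2 j) = x 1 j * x 1 (j + 1) := by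
  simp [hx 2 j, add_comm]

lemma map_three (hx : IsMayFamily d x) (j : ℕ) :
    d (x 3 j) = x 1 j * x 2 (j + 1) + x 2 j * x 1 (j + 2) := by
  simp [hx 3 j, sum_Icc_succ_top, add_comm j]

lemma map_four (hx : IsMayFamily d x) (j : ℕ) :
    d (x 4 j) = x 1 j * x 3 (j + 1) + x 2 j * x 2 (j + 2) + x 3 j * x 1 (j + 3) := by
  simp [hx 4 j, sum_Icc_succ_top, add_comm j]

lemma map_three_mul_three_mul_two (hx : IsMayFamily d x) (j : ℕ) :
    d (x 3 j * x 3 (j + 1) * x 2 (j + 2)) =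
      (x 1 j * x 2 (j + 1) + x 2 j * x 1 (j + 2)) * x 3 (j + 1) * x 2 (j + 2)
        + x 3 j * (x 1 (j + 1) * x 2 (j + 2) + x 2 (j + 1) * x 1 (j + 3)) * x 2 (j + 2)
        + x 3 j * x 3 (j + 1) * (x 1 (j + 2) * x 1 (j + 3)) := by
  simp only [Derivation.leibniz, smul_eq_mul, hx.map_two, hx.map_three]
  ring

variable [CharP A 2]

lemma map_hOne (hx : IsMayFamily d x) (j : ℕ) : d (hOne x j) = 0 := by
  simp only [hOne, map_add, Derivation.leibniz, smul_eq_mul, hx.map_one, hx.map_two, hx.map_three]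
  linear_combination
    x 1 (j + 1) * (x 1 j * x 2 (j + 1) + x 2 j * x 1 (j + 2)) * CharTwo.two_eq_zero (R := A)

lemma map_four_mul_hOne (hx : IsMayFamily d x) (j : ℕ) :
    d (x 4 j * hOne x (j + 1)) =
      (x 1 j * x 3 (j + 1) + x 2 j * x 2 (j + 2) + x 3 j * x 1 (j + 3)) * hOne x (j + 1) := by
  rw [Derivation.leibniz, hx.map_hOne, hx.map_four, smul_zero, zero_add, smul_eq_mul, mul_comm]

end IsMayFamily

theorem motivic_may_relation_b22_h01_general [CharP A 2] {d : Derivation R A A} {x : ℕ → ℕ → A}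
    (hx : IsMayFamily d x) (j : ℕ) :
    ∃ q : A, d q = x 2 (j + 2) ^ 2 * hOne x j + x 1 j * x 1 (j + 2) * x 3 (j + 1) ^ 2 := by
  refine ⟨x 4 j * hOne x (j + 1) + x 3 j * x 3 (j + 1) * x 2 (j + 2), ?_⟩
  rw [map_add, hx.map_four_mul_hOne, hx.map_three_mul_three_mul_two]
  simp only [hOne]
  linear_combination
    ((x 1 j * x 2 (j + 1) + x 2 j * x 1 (j + 2)) * x 3 (j + 1) * x 2 (j + 2)
      + x 3 j * x 1 (j + 3) * (x 2 (j + 1) * x 2 (j + 2) + x 1 (j + 2) * x 3 (j + 1)))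
      * CharTwo.two_eq_zero (R := A)

end MayFamily

/-- The element
`h_{2,2}^2 (h_{2,0} h_{2,1} + h_{1,1} h_{3,0}) + h_{1,0} h_{1,2} h_{3,1}^2`
lies in the image of the motivic May differential
(the relation `b22 * h0(1) = h0 * h2 * b31`). -/
theorem motivic_may_relation_b22_h01 (d : Derivation (ZMod 2) MayB MayB)
    (htau : d tau = 0)
    (hh : ∀ i j : ℕ, 1 ≤ i →
      d (h i j) = ∑ k ∈ Finset.Icc 1 (i - 1), h k j * h (i - k) (k + j)) :
    ∃ q : MayB, d q =
      (h 2 2) ^ 2 * (h 2 0 * h 2 1 + h 1 1 * h 3 0)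
        + h 1 0 * h 1 2 * (h 3 1) ^ 2 :=
  motivic_may_relation_b22_h01_general hh 0
end

section
/- For every n ≥ 1, the monomial h_{1,1}^n is not in the image of d. (Together with the fact that d(h_{1,1}) = 0, this says that the class h₁ is non-nilpotent in the E₂-term of the motivic May spectral sequence, reflecting the paper's observation that h₁ is not nilpotent in Ext over the motivic Steenrod algebra.) -/
open MvPolynomial Finset

/-!
Every term of the differential of a generator is a product of two distinct variables `h_{i,j}`: the
second indices in `h_{k,j} h_{i-k,k+j}` differ because `k ≥ 1`. Hence, by the Leibniz rule, every
coboundary vanishes at each point where at most one `h_{i,j}` is nonzero, whereas `τ^m h_{i,j}^n`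
takes the value `1` where `τ = h_{i,j} = 1`.
-/

section Derivation

variable {σ R M : Type*} [CommSemiring R] [AddCommMonoid M] [Module R M]
  [Module (MvPolynomial σ R) M]

theorem derivation_mem_of_forall_X_mem {D : Derivation R (MvPolynomial σ R) M}
    {N : Submodule (MvPolynomial σ R) M} (hX : ∀ s, D (X s) ∈ N) (p : MvPolynomial σ R) :
    D p ∈ N := by
  induction p using MvPolynomial.induction_on with
  | C a => simp only [derivation_C, zero_mem]
  | add p q hp hq => simpa only [map_add] using add_mem hp hq
  | mul_X p s hp =>
    rw [Derivation.leibniz]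
    exact add_mem (N.smul_mem p (hX s)) (N.smul_mem (X s) hp)

end Derivation

section AxisPoint

variable {ι R : Type*} [DecidableEq ι] [CommSemiring R]

/-- The point of affine space with coordinates indexed by `Option ι` at which the coordinate `none`
(in `MayB`, the variable `τ`) and the coordinate `some v` are `1` and all others vanish; evaluation
there detects the monomials in these two variables. -/
def axisPoint (v : ι) : Option ι → R :=
  fun s => s.elim 1 (Pi.single v 1)

theorem eval_axisPoint_X_mul_X_of_ne (v : ι) {s t : ι} (hst : s ≠ t) :
    eval (axisPoint (R := R) v) (X (some s) * X (some t)) = 0 := by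
  rcases ne_or_eq s v with hs | rfl
  · simp [axisPoint, hs]
  · simp [axisPoint, hst.symm]

end AxisPoint

theorem eval_axisPoint_h_mul_h_of_ne (v : ℕ × ℕ) (a b : ℕ) {j l : ℕ} (hjl : j ≠ l) :
    eval (axisPoint v) (h a j * h b l) = 0 :=
  eval_axisPoint_X_mul_X_of_ne v fun hst => hjl (congrArg Prod.snd hst)

theorem eval_axisPoint_tau_pow_mul_h_pow (i j m n : ℕ) :
    eval (axisPoint (i, j)) (tau ^ m * h (i + 1) j ^ n) = 1 := by
  simp [axisPoint, tau, h]

theorem eval_axisPoint_coboundary {d : Derivation (ZMod 2) MayB MayB} (htau : d tau = 0)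
    (hh : ∀ i j : ℕ, 1 ≤ i →
      d (h i j) = ∑ k ∈ Finset.Icc 1 (i - 1), h k j * h (i - k) (k + j))
    (v : ℕ × ℕ) (q : MayB) : eval (axisPoint v) (d q) = 0 := by
  suffices hX : ∀ s, d (X s) ∈ RingHom.ker (eval (axisPoint v)) from
    derivation_mem_of_forall_X_mem hX q
  rintro (_ | ⟨i, j⟩)
  · exact htau ▸ zero_mem _
  · change d (h (i + 1) j) ∈ _
    rw [hh (i + 1) j i.succ_pos]
    refine sum_mem fun k hk => eval_axisPoint_h_mul_h_of_ne v _ _ ?_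
    have hk_pos : 1 ≤ k := (Finset.mem_Icc.mp hk).1
    omega

theorem motivic_may_h1_pow_not_coboundary_general (d : Derivation (ZMod 2) MayB MayB)
    (htau : d tau = 0)
    (hh : ∀ i j : ℕ, 1 ≤ i →
      d (h i j) = ∑ k ∈ Finset.Icc 1 (i - 1), h k j * h (i - k) (k + j))
    (i j m n : ℕ) :
    ¬ ∃ q : MayB, d q = tau ^ m * h (i + 1) j ^ n := by
  rintro ⟨q, hq⟩
  have hzero : eval (axisPoint (i, j)) (d q) = 0 := eval_axisPoint_coboundary htau hh (i, j) q
  rw [hq, eval_axisPoint_tau_pow_mul_h_pow] at hzero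
  exact one_ne_zero hzero

/-- For every `n ≥ 1`, the monomial `h_{1,1}^n` is not a coboundary for the
motivic May differential: the class `h1` is non-nilpotent in the E2-term of
the motivic May spectral sequence. -/
theorem motivic_may_h1_pow_not_coboundary (d : Derivation (ZMod 2) MayB MayB)
    (htau : d tau = 0)
    (hh : ∀ i j : ℕ, 1 ≤ i →
      d (h i j) = ∑ k ∈ Finset.Icc 1 (i - 1), h k j * h (i - k) (k + j))
    (n : ℕ) (hn : 1 ≤ n) :
    ¬ ∃ q : MayB, d q = (h 1 1) ^ n := by
  simpa only [pow_zero, one_mul] using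
    motivic_may_h1_pow_not_coboundary_general d htau hh 0 1 0 n
end

section
/- (Lemma 5.1.) If b(x) is odd and v(t) = v(r) + v(s), then odd(t) = odd(r) + odd(s); that is, the number of n ≥ 1 with t(n) odd equals the number of i ≥ 1 with r(i) odd plus the number of j ≥ 1 with s(j) odd. (Equivalently: in the motivic Milnor-basis product formula, if the multinomial coefficient b(X) is nonzero mod 2 and the May filtration of P^{T(X)} equals the sum of the May filtrations of P^R and P^S, then the exponent u(X) of τ is zero.) -/
/-!
Write `σ` for the sum of binary digits. It is subadditive, with equality exactly when the addition
produces no carry, and a multinomial coefficient is odd exactly when its sum is carry-free (Kummer).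
So if `b x` is odd, every antidiagonal of `x` is added without carries and
`v t = ∑ (i + j) * σ (x (i, j))`, while subadditivity gives `v r ≤ ∑ i * σ (x (i, j))` and
`v s ≤ ∑ j * σ (x (i, j))`. If `v t = v r + v s`, both are equalities, so all columns `j ≥ 1` are
carry-free as well. In a carry-free sum the last digits simply add up, and the last digit of `r i`
is that of `x (i, 0)`; hence both sides of the claim count the odd entries of `x`. For a
prime `p`, base `p` digits and residues mod `p` can take the place of bits and parities.
-/

open Finset

section DigitSum

/-- The sum of the base `b` digits of `n`, which for `b = 2` is the number of ones occurring in the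
May filtration. With the conventions of `Nat.digits`, `digitSum b n = n` for `b ≤ 1`. -/
def digitSum (b n : ℕ) : ℕ := (b.digits n).sum

@[simp]
theorem digitSum_zero (b : ℕ) : digitSum b 0 = 0 := by
  simp [digitSum]

theorem count_true_bits_eq_digitSum (n : ℕ) : n.bits.count true = digitSum 2 n := by
  rw [digitSum, Nat.digits_two_eq_bits]
  induction n.bits with
  | nil => rfl
  | cons bit bits ih => cases bit <;> simp [ih, add_comm]

theorem digitSum_of_le_one {b : ℕ} (hb : b ≤ 1) (n : ℕ) : digitSum b n = n := by
  interval_cases b <;> cases n <;> simp [digitSum]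

theorem digitSum_eq_mod_add_digitSum_div (b n : ℕ) :
    digitSum b n = n % b + digitSum b (n / b) := by
  rcases n.eq_zero_or_pos with rfl | hn
  · simp
  rcases Nat.lt_or_ge 1 b with hb | hb
  · rw [digitSum, Nat.digits_def' hb hn, List.sum_cons, digitSum]
  · interval_cases b <;> simp [digitSum_of_le_one, Nat.mod_one]

theorem digitSum_pow_mul {b : ℕ} (hb : 0 < b) (k n : ℕ) :
    digitSum b (b ^ k * n) = digitSum b n := by
  induction k with
  | zero => simp
  | succ k ih =>
    rw [digitSum_eq_mod_add_digitSum_div, pow_succ', mul_assoc, Nat.mul_mod_right,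
      Nat.mul_div_cancel_left _ hb, zero_add, ih]

/-- `(m % b + n % b) / b` is the carry out of the last digit. -/
theorem digitSum_add_add_carry_le (b m n : ℕ) :
    digitSum b (m + n) + (b - 1) * ((m % b + n % b) / b) ≤ digitSum b m + digitSum b n := by
  rcases le_or_gt b 1 with hb | hb
  · interval_cases b <;> simp [digitSum_of_le_one]
  induction hk : m + n using Nat.strong_induction_on generalizing m n with | _ k ih
  subst hk
  rcases (m + n).eq_zero_or_pos with hzero | hpos
  · simp_all
  set c := (m % b + n % b) / b with hc
  have hdiv : (m + n) / b = m / b + n / b + c := by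
    conv_lhs => rw [← Nat.div_add_mod m b, ← Nat.div_add_mod n b]
    rw [add_add_add_comm, ← mul_add, Nat.mul_add_div (by lia)]
  have hmod : (m + n) % b + b * c = m % b + n % b := by
    rw [Nat.add_mod, hc, Nat.mod_add_div]
  have hlt : m / b + n / b + c < m + n := hdiv ▸ Nat.div_lt_self hpos hb
  have hquot : digitSum b (m / b + n / b) ≤ digitSum b (m / b) + digitSum b (n / b) :=
    (Nat.le_add_right _ _).trans (ih _ (by lia) _ _ rfl)
  have hcarry : digitSum b (m / b + n / b + c) ≤ digitSum b (m / b + n / b) + c :=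
    (Nat.le_add_right _ _).trans <|
      (ih _ hlt _ _ rfl).trans (Nat.add_le_add_left (Nat.digit_sum_le b c) _)
  have hbc : (b - 1) * c + c = b * c := by
    rw [← Nat.succ_mul, Nat.succ_eq_add_one, Nat.sub_add_cancel hb.le]
  rw [digitSum_eq_mod_add_digitSum_div b (m + n), hdiv, digitSum_eq_mod_add_digitSum_div b m,
    digitSum_eq_mod_add_digitSum_div b n]
  lia

theorem digitSum_add_le (b m n : ℕ) : digitSum b (m + n) ≤ digitSum b m + digitSum b n :=
  (Nat.le_add_right _ _).trans (digitSum_add_add_carry_le b m n)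

theorem add_mod_of_digitSum_add {b m n : ℕ}
    (h : digitSum b (m + n) = digitSum b m + digitSum b n) :
    (m + n) % b = m % b + n % b := by
  rcases Nat.lt_or_ge 1 b with hb | hb
  · have hcarry : (b - 1) * ((m % b + n % b) / b) = 0 := by
      have := digitSum_add_add_carry_le b m n
      lia
    rw [mul_eq_zero_iff_left (by lia), Nat.div_eq_zero_iff_lt (by lia)] at hcarry
    exact Nat.add_mod_of_add_mod_lt hcarry
  · interval_cases b <;> simp [Nat.mod_one]

theorem digitSum_sum_le {ι : Type*} (b : ℕ) (s : Finset ι) (f : ι → ℕ) :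
    digitSum b (∑ i ∈ s, f i) ≤ ∑ i ∈ s, digitSum b (f i) :=
  le_sum_of_subadditive _ (digitSum_zero b).le (digitSum_add_le b) s f

end DigitSum

section CarryFree

variable {ι : Type*} {b : ℕ} {s : Finset ι} {f : ι → ℕ}

/-- Adding up the numbers `f i`, `i ∈ s`, in base `b` produces no carry. For `b ≥ 2` this
amounts to additivity of the digit sum, which is taken as the definition. -/
def CarryFree (b : ℕ) (s : Finset ι) (f : ι → ℕ) : Prop :=
  digitSum b (∑ i ∈ s, f i) = ∑ i ∈ s, digitSum b (f i)

theorem CarryFree.sum_mod (h : CarryFree b s f) : (∑ i ∈ s, f i) % b = ∑ i ∈ s, f i % b := by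
  classical
  induction s using Finset.induction_on with
  | empty => simp
  | insert a s ha ih =>
    rw [CarryFree, sum_insert ha, sum_insert ha] at h
    have hadd := digitSum_add_le b (f a) (∑ i ∈ s, f i)
    have hsum := digitSum_sum_le b s f
    rw [sum_insert ha, sum_insert ha, add_mod_of_digitSum_add (by lia),
      ih (show digitSum b _ = _ by lia)]

theorem digitSum_add_of_not_dvd_choose {p m n : ℕ} (hp : p.Prime)
    (h : ¬ p ∣ (m + n).choose m) : digitSum p (m + n) = digitSum p m + digitSum p n := by
  have := Fact.mk hp
  have hkummer := sub_one_mul_padicValNat_choose_eq_sub_sum_digits' (p := p) (k := m) (n := n)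
  rw [add_comm n m, padicValNat.eq_zero_of_not_dvd h, mul_zero] at hkummer
  exact (digitSum_add_le p m n).antisymm (Nat.sub_eq_zero_iff_le.1 hkummer.symm)

theorem carryFree_of_not_dvd_multinomial {p : ℕ} (hp : p.Prime)
    (h : ¬ p ∣ Nat.multinomial s f) : CarryFree p s f := by
  classical
  induction s using Finset.induction_on with
  | empty => simp [CarryFree]
  | insert a s ha ih =>
    rw [Nat.multinomial_insert ha, hp.dvd_mul, not_or] at h
    rw [CarryFree, sum_insert ha, sum_insert ha, digitSum_add_of_not_dvd_choose hp h.1, ih h.2]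

end CarryFree

theorem sum_range_diag_eq_sum_range_sum_range {A : Type*} [AddCommMonoid A] {M : ℕ}
    {F : ℕ → ℕ → A} (hF : ∀ i j, M ≤ i + j → F i j = 0) :
    ∑ n ∈ range M, ∑ i ∈ range (n + 1), F i (n - i) = ∑ i ∈ range M, ∑ j ∈ range M, F i j := by
  rw [sum_range_diag_flip]
  exact sum_congr rfl fun i _ ↦
    (eventually_constant_sum (fun j hj ↦ hF i j (by lia)) (M.sub_le i)).symm

section MilnorMatrix

/-- The entries of the sequence `R(X)` of a Milnor matrix `x` whose columns from the `N`-th on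
vanish. -/
def rowSum (p N : ℕ) (x : ℕ × ℕ → ℕ) (i : ℕ) : ℕ := ∑ j ∈ range N, p ^ j * x (i, j)

/-- The entries of the sequence `S(X)` of a Milnor matrix `x` whose rows from the `N`-th on
vanish. -/
def colSum (N : ℕ) (x : ℕ × ℕ → ℕ) (j : ℕ) : ℕ := ∑ i ∈ range N, x (i, j)

/-- The entries of the sequence `T(X)` of a Milnor matrix `x`. -/
def diagSum (x : ℕ × ℕ → ℕ) (n : ℕ) : ℕ := ∑ i ∈ range (n + 1), x (i, n - i)

/-- The May filtration of the Milnor basis element `P^m`, for a sequence `m` that vanishes from `M`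
on, with base `p` digits in place of binary ones. -/
def mayFiltration (p M : ℕ) (m : ℕ → ℕ) : ℕ := ∑ n ∈ range M, n * digitSum p (m n)

variable {p M N : ℕ} {x : ℕ × ℕ → ℕ}

theorem rowSum_eq_of_le (hx : ∀ i j, N ≤ j → x (i, j) = 0) (h : N ≤ M) :
    rowSum p M x = rowSum p N x :=
  funext fun i ↦ eventually_constant_sum (fun j hj ↦ by rw [hx i j hj, mul_zero]) h

theorem colSum_eq_of_le (hx : ∀ i j, N ≤ i → x (i, j) = 0) (h : N ≤ M) :
    colSum M x = colSum N x :=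
  funext fun j ↦ eventually_constant_sum (fun i hi ↦ hx i j hi) h

theorem rowSum_mod (hN : 0 < N) (i : ℕ) : rowSum p N x i % p = x (i, 0) % p := by
  obtain ⟨N, rfl⟩ := Nat.exists_eq_add_of_lt hN
  have hdvd : p ∣ ∑ j ∈ range N, p ^ (j + 1) * x (i, j + 1) :=
    dvd_sum fun j _ ↦ (dvd_pow_self p j.succ_ne_zero).mul_right _
  rw [rowSum, zero_add, sum_range_succ', pow_zero, one_mul, Nat.add_mod,
    Nat.mod_eq_zero_of_dvd hdvd, zero_add, Nat.mod_mod]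

theorem digitSum_rowSum_le (hp : 0 < p) (N : ℕ) (x : ℕ × ℕ → ℕ) (i : ℕ) :
    digitSum p (rowSum p N x i) ≤ ∑ j ∈ range N, digitSum p (x (i, j)) := by
  simpa only [rowSum, digitSum_pow_mul hp] using
    digitSum_sum_le p (range N) fun j ↦ p ^ j * x (i, j)

theorem mayFiltration_rowSum_le (hp : 0 < p) (M : ℕ) (x : ℕ × ℕ → ℕ) :
    mayFiltration p M (rowSum p M x)
      ≤ ∑ i ∈ range M, ∑ j ∈ range M, i * digitSum p (x (i, j)) := by
  simp only [← mul_sum]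
  exact sum_le_sum fun i _ ↦ Nat.mul_le_mul_left i (digitSum_rowSum_le hp M x i)

theorem mayFiltration_diagSum (hx : ∀ i j, M ≤ i + j → x (i, j) = 0)
    (hdiag : ∀ n < M, CarryFree p (range (n + 1)) fun i ↦ x (i, n - i)) :
    mayFiltration p M (diagSum x)
      = ∑ i ∈ range M, ∑ j ∈ range M, (i + j) * digitSum p (x (i, j)) := by
  rw [← sum_range_diag_eq_sum_range_sum_range fun i j h ↦ by rw [hx i j h, digitSum_zero, mul_zero]]
  refine sum_congr rfl fun n hn ↦ ?_
  rw [diagSum, hdiag n (mem_range.1 hn), mul_sum]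
  refine sum_congr rfl fun i hi ↦ ?_
  rw [Nat.add_sub_cancel' (Nat.le_of_lt_succ (mem_range.1 hi))]

theorem carryFree_col_of_mayFiltration_le (hp : 0 < p) (hx : ∀ i j, M ≤ i + j → x (i, j) = 0)
    (hdiag : ∀ n < M, CarryFree p (range (n + 1)) fun i ↦ x (i, n - i))
    (hv : mayFiltration p M (diagSum x)
      ≤ mayFiltration p M (rowSum p M x) + mayFiltration p M (colSum M x))
    {j : ℕ} (hj : j ∈ Ico 1 M) : CarryFree p (range M) fun i ↦ x (i, j) := by
  obtain ⟨hj1, hjM⟩ := mem_Ico.1 hj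
  have hcol : ∀ j ∈ range M,
      j * digitSum p (colSum M x j) ≤ j * ∑ i ∈ range M, digitSum p (x (i, j)) :=
    fun j _ ↦ Nat.mul_le_mul_left j (digitSum_sum_le p _ _)
  have hrow := mayFiltration_rowSum_le hp M x
  have htotal : mayFiltration p M (diagSum x)
      = ∑ i ∈ range M, ∑ j ∈ range M, i * digitSum p (x (i, j))
        + ∑ j ∈ range M, j * ∑ i ∈ range M, digitSum p (x (i, j)) := by
    rw [mayFiltration_diagSum hx hdiag]
    simp only [add_mul, sum_add_distrib, mul_sum]
    rw [sum_comm (f := fun j i ↦ j * digitSum p (x (i, j)))]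
  have hge : ∑ j ∈ range M, j * ∑ i ∈ range M, digitSum p (x (i, j))
      ≤ mayFiltration p M (colSum M x) := by
    lia
  have heq := (sum_eq_sum_iff_of_le hcol).1 ((sum_le_sum hcol).antisymm hge)
  exact Nat.eq_of_mul_eq_mul_left hj1 (heq j (mem_range.2 hjM))

theorem sum_diagSum_mod (hx : ∀ i j, M ≤ i + j → x (i, j) = 0)
    (hdiag : ∀ n < M, CarryFree p (range (n + 1)) fun i ↦ x (i, n - i))
    (hcol : ∀ j ∈ Ico 1 M, CarryFree p (range M) fun i ↦ x (i, j)) :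
    ∑ n ∈ Ico 1 M, diagSum x n % p
      = ∑ i ∈ Ico 1 M, rowSum p M x i % p + ∑ j ∈ Ico 1 M, colSum M x j % p := by
  rcases M.eq_zero_or_pos with rfl | hM
  · rfl
  have hrows : ∑ i ∈ Ico 1 M, rowSum p M x i % p = ∑ i ∈ Ico 1 M, x (i, 0) % p :=
    sum_congr rfl fun i _ ↦ rowSum_mod hM i
  have hcols : ∑ j ∈ Ico 1 M, colSum M x j % p = ∑ j ∈ Ico 1 M, ∑ i ∈ range M, x (i, j) % p :=
    sum_congr rfl fun j hj ↦ (hcol j hj).sum_mod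
  have hzero : diagSum x 0 = x (0, 0) := by simp [diagSum]
  have hentries : ∑ n ∈ range M, diagSum x n % p = ∑ j ∈ range M, ∑ i ∈ range M, x (i, j) % p := by
    rw [sum_comm,
      ← sum_range_diag_eq_sum_range_sum_range fun i j h ↦ by rw [hx i j h, Nat.zero_mod]]
    exact sum_congr rfl fun n hn ↦ (hdiag n (mem_range.1 hn)).sum_mod
  rw [sum_range_eq_add_Ico _ hM, sum_range_eq_add_Ico _ hM, sum_range_eq_add_Ico _ hM,
    hzero, add_assoc] at hentries
  rw [hrows, hcols, Nat.add_left_cancel hentries]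

end MilnorMatrix

theorem card_filter_odd {ι : Type*} (s : Finset ι) (m : ι → ℕ) :
    #{n ∈ s | Odd (m n)} = ∑ n ∈ s, m n % 2 := by
  rw [card_filter]
  refine sum_congr rfl fun n _ ↦ ?_
  split_ifs with h
  · exact (Nat.odd_iff.1 h).symm
  · exact (Nat.even_iff.1 (Nat.not_odd_iff_even.1 h)).symm

theorem milnor_tau_exponent_zero_general {p : ℕ} (hp : p.Prime) (N : ℕ) (x : ℕ × ℕ → ℕ)
    (hN : ∀ i j : ℕ, N ≤ i ∨ N ≤ j → x (i, j) = 0)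
    (r s t : ℕ → ℕ)
    (hr : ∀ i, r i = ∑ j ∈ range N, p ^ j * x (i, j))
    (hs : ∀ j, s j = ∑ i ∈ range N, x (i, j))
    (ht : ∀ n, t n = ∑ i ∈ range (n + 1), x (i, n - i))
    (hb : ¬ p ∣ ∏ n ∈ Icc 1 (2 * N), Nat.multinomial (range (n + 1)) fun i ↦ x (i, n - i))
    (hv : mayFiltration p (2 * N + 1) t
      = mayFiltration p (2 * N + 1) r + mayFiltration p (2 * N + 1) s) :
    ∑ n ∈ Icc 1 (2 * N), t n % p = ∑ n ∈ Icc 1 (2 * N), r n % p + ∑ n ∈ Icc 1 (2 * N), s n % p := by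
  obtain rfl : t = diagSum x := funext ht
  obtain rfl : r = rowSum p (2 * N + 1) x :=
    (funext hr).trans (rowSum_eq_of_le (fun i j h ↦ hN i j (.inr h)) (by lia)).symm
  obtain rfl : s = colSum (2 * N + 1) x :=
    (funext hs).trans (colSum_eq_of_le (fun i j h ↦ hN i j (.inl h)) (by lia)).symm
  have hx : ∀ i j, 2 * N + 1 ≤ i + j → x (i, j) = 0 := fun i j h ↦ hN i j (by lia)
  have hdiag : ∀ n < 2 * N + 1, CarryFree p (range (n + 1)) fun i ↦ x (i, n - i) := by
    intro n hn
    rcases n.eq_zero_or_pos with rfl | hpos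
    · simp [CarryFree]
    · exact carryFree_of_not_dvd_multinomial hp fun hdvd ↦
        hb (hdvd.trans (dvd_prod_of_mem _ (mem_Icc.2 ⟨hpos, by lia⟩)))
  rw [← Ico_add_one_right_eq_Icc]
  exact sum_diagSum_mod hx hdiag fun j ↦
    carryFree_col_of_mayFiltration_le hp.pos hx hdiag hv.le

/-- Lemma 5.1 of Dugger–Isaksen, "The motivic Adams spectral sequence".
Milnor matrix setup: `x : ℕ × ℕ → ℕ` is a matrix with `x (0,0) = 0`, supported
on entries with both coordinates `< N`.  Set `r i = Σ_j 2^j * x (i,j)`,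
`s j = Σ_i x (i,j)`, `t n = Σ_{i+j=n} x (i,j)`, and let
`b x = Π_{n ≥ 1} multinomial (x (0,n), x (1,n-1), ..., x (n,0))`.
For a sequence `m` let `v m = Σ_{i ≥ 1} i * (number of ones in the binary
expansion of `m i`)` and let `odd m` be the number of `i ≥ 1` with `m i` odd.
If `b x` is odd and `v t = v r + v s`, then `odd t = odd r + odd s`; that is,
in the motivic Milnor-basis product formula, if `b(X)` is nonzero mod 2 and the
May filtration of `P^{T(X)}` is the sum of those of `P^R` and `P^S`, then the
exponent `u(X)` of `τ` is zero. -/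
theorem milnor_tau_exponent_zero (N : ℕ) (x : ℕ × ℕ → ℕ)
    (hx00 : x (0, 0) = 0)
    (hN : ∀ i j : ℕ, N ≤ i ∨ N ≤ j → x (i, j) = 0)
    (r s t : ℕ → ℕ)
    (hr : ∀ i, r i = ∑ j ∈ Finset.range N, 2 ^ j * x (i, j))
    (hs : ∀ j, s j = ∑ i ∈ Finset.range N, x (i, j))
    (ht : ∀ n, t n = ∑ i ∈ Finset.range (n + 1), x (i, n - i))
    (hb : Odd (∏ n ∈ Finset.Icc 1 (2 * N),
      Nat.multinomial (Finset.range (n + 1)) fun i => x (i, n - i)))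
    (hv : ∑ n ∈ Finset.range (2 * N + 1), n * ((Nat.bits (t n)).count true)
        = (∑ n ∈ Finset.range (2 * N + 1), n * ((Nat.bits (r n)).count true))
          + ∑ n ∈ Finset.range (2 * N + 1), n * ((Nat.bits (s n)).count true)) :
    ((Finset.Icc 1 (2 * N)).filter fun n => Odd (t n)).card
      = ((Finset.Icc 1 (2 * N)).filter fun n => Odd (r n)).card
        + ((Finset.Icc 1 (2 * N)).filter fun n => Odd (s n)).card := by
  simp only [count_true_bits_eq_digitSum] at hv
  simp only [card_filter_odd]
  exact milnor_tau_exponent_zero_general Nat.prime_two N x hN r s t hr hs ht hb.not_two_dvd_nat hv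
end

section
/- If b(x) is odd, then odd(t) ≥ odd(r) + odd(s); that is, the number of n ≥ 1 with t(n) odd is at least the number of i ≥ 1 with r(i) odd plus the number of j ≥ 1 with s(j) odd. (Equivalently: the exponent u(X) of τ appearing in each nonzero term of the motivic Milnor-basis product formula is a non-negative integer.) -/
/-! If a multinomial coefficient is odd, at most one of its lower indices is odd: with two odd
indices one of its binomial factors has an even top and an odd bottom. So when `b x` is odd each
antidiagonal contains at most one odd entry of `x`, and `t n` is odd exactly when it contains one:
`odd(t)` is the number of odd entries. As `r i ≡ x (i, 0) (mod 2)`, an odd `r i` forces an odd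
entry in column `0`; an odd `s j` with `j ≥ 1` forces an odd entry in column `j ≠ 0`. These
entries are distinct, so there are at least `odd(r) + odd(s)` odd entries. -/

open Finset

theorem dvd_choose_of_dvd_of_coprime {m n k : ℕ} (hmn : m ∣ n) (hmk : m.Coprime k) :
    m ∣ n.choose k := by
  rcases n with _ | n <;> rcases k with _ | k
  · simpa using hmk
  · simp
  · simpa using hmk
  · exact hmk.dvd_of_dvd_mul_right (Nat.add_one_mul_choose_eq n k ▸ hmn.mul_right _)

theorem odd_of_odd_choose {n k : ℕ} (hk : Odd k) (h : Odd (n.choose k)) : Odd n := by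
  contrapose! h
  rw [Nat.not_odd_iff_even, even_iff_two_dvd] at h ⊢
  exact dvd_choose_of_dvd_of_coprime h (Nat.coprime_two_left.2 hk)

section Sums

variable {ι : Type*} {s : Finset ι} {f : ι → ℕ}

theorem exists_odd_of_odd_sum (h : Odd (∑ i ∈ s, f i)) : ∃ i ∈ s, Odd (f i) := by
  contrapose! h
  simp only [Nat.not_odd_iff_even] at h ⊢
  exact even_sum f h

theorem card_odd_le_one_of_odd_multinomial (h : Odd (Nat.multinomial s f)) :
    #{i ∈ s | Odd (f i)} ≤ 1 := by
  induction s using Finset.cons_induction with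
  | empty => simp
  | cons a s ha ih =>
    rw [Nat.multinomial_cons, Nat.odd_mul] at h
    specialize ih h.2
    by_cases hfa : Odd (f a)
    · have hsum : Even (∑ i ∈ s, f i) := by
        have htop : Odd (f a + ∑ i ∈ s, f i) := odd_of_odd_choose hfa h.1
        grind
      have hcard : #{i ∈ s | Odd (f i)} = 0 := by
        rw [even_sum_iff_even_card_odd] at hsum
        grind
      simp [filter_cons, hfa, hcard]
    · simpa [filter_cons, hfa] using ih

theorem odd_sum_of_odd_multinomial (h : Odd (Nat.multinomial s f)) {i : ι} (hi : i ∈ s)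
    (hfi : Odd (f i)) : Odd (∑ i ∈ s, f i) := by
  have hpos : 0 < #{i ∈ s | Odd (f i)} := card_pos.2 ⟨i, mem_filter.2 ⟨hi, hfi⟩⟩
  have hcard : #{i ∈ s | Odd (f i)} = 1 :=
    (card_odd_le_one_of_odd_multinomial h).antisymm hpos
  rw [odd_sum_iff_odd_card_odd, hcard]
  exact odd_one

end Sums

theorem odd_of_odd_sum_two_pow_mul {s : Finset ℕ} {a : ℕ → ℕ}
    (h : Odd (∑ j ∈ s, 2 ^ j * a j)) : Odd (a 0) := by
  obtain ⟨j, -, hj⟩ := exists_odd_of_odd_sum h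
  obtain ⟨hpow, ha⟩ := Nat.odd_mul.1 hj
  obtain rfl : j = 0 := by simpa [← Nat.not_even_iff_odd, Nat.even_pow] using hpow
  exact ha

/-- The positions of the odd entries of a finitely supported matrix. -/
def oddSupport (x : ℕ × ℕ →₀ ℕ) : Finset (ℕ × ℕ) := {p ∈ x.support | Odd (x p)}

namespace oddSupport

variable {x : ℕ × ℕ →₀ ℕ}

theorem mem_iff {p : ℕ × ℕ} : p ∈ oddSupport x ↔ Odd (x p) := by
  simpa [oddSupport] using fun h : Odd (x p) ↦ h.pos.ne'

theorem card_odd_row_sums_le (I J : Finset ℕ) :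
    #{i ∈ I | Odd (∑ j ∈ J, 2 ^ j * x (i, j))} ≤ #{p ∈ oddSupport x | p.2 = 0} := by
  refine card_le_card_of_surjOn Prod.fst fun i hi ↦ ⟨(i, 0), ?_, rfl⟩
  have hrow : Odd (x (i, 0)) := odd_of_odd_sum_two_pow_mul (mem_filter.1 hi).2
  simpa [mem_iff] using hrow

theorem card_odd_column_sums_le (I : Finset ℕ) {J : Finset ℕ} (hJ : 0 ∉ J) :
    #{j ∈ J | Odd (∑ i ∈ I, x (i, j))} ≤ #{p ∈ oddSupport x | p.2 ≠ 0} := by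
  refine card_le_card_of_surjOn Prod.snd fun j hj ↦ ?_
  obtain ⟨hjJ, hodd⟩ := mem_filter.1 hj
  obtain ⟨i, -, hi⟩ := exists_odd_of_odd_sum hodd
  exact ⟨(i, j), by simpa [mem_iff, hi] using ne_of_mem_of_not_mem hjJ hJ, rfl⟩

theorem injOn_add
    (h : ∀ p ∈ oddSupport x,
      Odd (Nat.multinomial (range (p.1 + p.2 + 1)) fun i ↦ x (i, p.1 + p.2 - i))) :
    Set.InjOn (fun p ↦ p.1 + p.2) (oddSupport x : Set (ℕ × ℕ)) := by
  rintro ⟨i, j⟩ hp ⟨i', j'⟩ hq (hadd : i + j = i' + j')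
  have hxp : Odd (x (i, j)) := mem_iff.1 hp
  have hxq : Odd (x (i', j')) := mem_iff.1 hq
  have hi : i = i' := by
    refine card_le_one.1 (card_odd_le_one_of_odd_multinomial (h _ hp)) i ?_ i' ?_
    · simpa using hxp
    · simpa [hadd, Nat.lt_succ_iff] using hxq
  grind

theorem card_le_card_odd_antidiagonal_sums {D : Finset ℕ}
    (hD : ∀ p ∈ oddSupport x, p.1 + p.2 ∈ D)
    (h : ∀ n ∈ D, Odd (Nat.multinomial (range (n + 1)) fun i ↦ x (i, n - i))) :
    #(oddSupport x) ≤ #{n ∈ D | Odd (∑ i ∈ range (n + 1), x (i, n - i))} := by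
  refine card_le_card_of_injOn (fun p ↦ p.1 + p.2) (fun p hp ↦ ?_)
    (injOn_add fun p hp ↦ h _ (hD p hp))
  refine mem_filter.2 ⟨hD p hp, odd_sum_of_odd_multinomial (h _ (hD p hp)) (i := p.1) ?_ ?_⟩
  · simp
  · simpa using mem_iff.1 hp

end oddSupport

/-- Milnor matrix setup: `x : ℕ × ℕ → ℕ` is a matrix with `x (0,0) = 0`,
supported on entries with both coordinates `< N`.  Set
`r i = Σ_j 2^j * x (i,j)`, `s j = Σ_i x (i,j)`, `t n = Σ_{i+j=n} x (i,j)`, and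
`b x = Π_{n ≥ 1} multinomial (x (0,n), x (1,n-1), ..., x (n,0))`.
If `b x` is odd then the number of `n ≥ 1` with `t n` odd is at least the
number of `i ≥ 1` with `r i` odd plus the number of `j ≥ 1` with `s j` odd;
that is, the exponent `u(X)` of `τ` appearing in each nonzero term of the
motivic Milnor-basis product formula is a non-negative integer. -/
theorem milnor_tau_exponent_nonneg (N : ℕ) (x : ℕ × ℕ → ℕ)
    (hx00 : x (0, 0) = 0)
    (hN : ∀ i j : ℕ, N ≤ i ∨ N ≤ j → x (i, j) = 0)
    (r s t : ℕ → ℕ)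
    (hr : ∀ i, r i = ∑ j ∈ Finset.range N, 2 ^ j * x (i, j))
    (hs : ∀ j, s j = ∑ i ∈ Finset.range N, x (i, j))
    (ht : ∀ n, t n = ∑ i ∈ Finset.range (n + 1), x (i, n - i))
    (hb : Odd (∏ n ∈ Finset.Icc 1 (2 * N),
      Nat.multinomial (Finset.range (n + 1)) fun i => x (i, n - i))) :
    ((Finset.Icc 1 (2 * N)).filter fun n => Odd (r n)).card
      + ((Finset.Icc 1 (2 * N)).filter fun n => Odd (s n)).card
      ≤ ((Finset.Icc 1 (2 * N)).filter fun n => Odd (t n)).card := by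
  simp only [hr, hs, ht]
  obtain ⟨x, rfl⟩ : ∃ y : ℕ × ℕ →₀ ℕ, ⇑y = x :=
    ⟨.onFinset (range N ×ˢ range N) x fun p hp ↦ by grind [hN p.1 p.2], rfl⟩
  have hD : ∀ p ∈ oddSupport x, p.1 + p.2 ∈ Icc 1 (2 * N) := by
    intro ⟨i, j⟩ hp
    have hne : x (i, j) ≠ 0 := (oddSupport.mem_iff.1 hp).pos.ne'
    grind
  have hmult : ∀ n ∈ Icc 1 (2 * N),
      Odd (Nat.multinomial (range (n + 1)) fun i ↦ x (i, n - i)) :=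
    fun n hn ↦ hb.of_dvd_nat (dvd_prod_of_mem _ hn)
  calc
    _ ≤ #{p ∈ oddSupport x | p.2 = 0} + #{p ∈ oddSupport x | p.2 ≠ 0} :=
      add_le_add (oddSupport.card_odd_row_sums_le _ _)
        (oddSupport.card_odd_column_sums_le _ (by simp))
    _ = #(oddSupport x) := card_filter_add_card_filter_not _
    _ ≤ _ := oddSupport.card_le_card_odd_antidiagonal_sums hD hmult
end

section
/- Let S ⊆ ℤ × ℤ be a set of bidegrees such that (i) the first coordinates of elements of S are bounded below, and (ii) for each (a,b) ∈ S there are only finitely many (c,d) ∈ S with c = a and d ≤ b. Then S is motivically finite type. -/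
/-- A set of bidegrees `(p, q) ∈ ℤ × ℤ` (with Chow weight `2q - p`) is
motivically finite type if, for every `(a, b)` in it, only finitely many of
its members `(c, d)` satisfy `c ≤ a` and `2d - c ≤ 2b - a`. -/
def MotivicallyFiniteType (S : Set (ℤ × ℤ)) : Prop :=
  ∀ p ∈ S, {q : ℤ × ℤ | q ∈ S ∧ q.1 ≤ p.1 ∧ 2 * q.2 - q.1 ≤ 2 * p.2 - p.1}.Finite

/-! Adding `c ≤ a` to `2d - c ≤ 2b - a` gives `d ≤ b`, so it suffices that `S` has finitely many
members below `(a, b)` in the product order. These lie in finitely many columns, as the first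
coordinates are bounded below. A nonempty column has finitely many elements below one of its own
members, hence is itself bounded below, hence has finitely many elements below any height `b`. -/

open Set

section Order

variable {α β : Type*}

theorem bddBelow_of_finite_inter_Iic [LinearOrder β] {T : Set β} {t : β}
    (h : (T ∩ Iic t).Finite) : BddBelow T := by
  have : Nonempty β := ⟨t⟩
  have hcover : T ⊆ T ∩ Iic t ∪ Ici t := fun x hx ↦
    (le_total x t).imp_left fun hxt ↦ ⟨hx, hxt⟩
  exact (h.bddBelow.union bddBelow_Ici).mono hcover

theorem finite_inter_Iic_of_bddBelow [Preorder β] [LocallyFiniteOrder β] {T : Set β}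
    (h : BddBelow T) (b : β) : (T ∩ Iic b).Finite :=
  (h.mono inter_subset_left).finite_of_bddAbove (bddAbove_Iic.mono inter_subset_right)

theorem finite_inter_Iic_of_bddBelow_columns [Preorder α] [LocallyFiniteOrder α]
    [Preorder β] [LocallyFiniteOrder β] {S : Set (α × β)} (hfst : BddBelow (Prod.fst '' S))
    (hcol : ∀ a ∈ Prod.fst '' S, BddBelow (Prod.mk a ⁻¹' S)) (p : α × β) :
    (S ∩ Iic p).Finite := by
  refine Finite.of_finite_fibers Prod.fst ?_ ?_
  · refine (finite_inter_Iic_of_bddBelow hfst p.1).subset ?_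
    rintro _ ⟨q, ⟨hqS, hqp⟩, rfl⟩
    exact ⟨mem_image_of_mem _ hqS, hqp.1⟩
  · intro a ha
    have hbdd : BddBelow (Prod.mk a ⁻¹' S) := hcol a (image_mono inter_subset_left ha)
    refine ((finite_inter_Iic_of_bddBelow hbdd p.2).image (Prod.mk a)).subset ?_
    rintro ⟨_, d⟩ ⟨⟨hqS, hqp⟩, rfl⟩
    exact ⟨d, ⟨hqS, hqp.2⟩, rfl⟩

theorem motivicallyFiniteType_of_bddBelow_of_col_finite_general [Preorder α]
    [LocallyFiniteOrder α] [LinearOrder β] [LocallyFiniteOrder β] {S : Set (α × β)}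
    (hfst : BddBelow (Prod.fst '' S))
    (hcol : ∀ p ∈ S, {q : α × β | q ∈ S ∧ q.1 = p.1 ∧ q.2 ≤ p.2}.Finite) (p : α × β) :
    (S ∩ Iic p).Finite := by
  refine finite_inter_Iic_of_bddBelow_columns hfst ?_ p
  rintro _ ⟨r, hr, rfl⟩
  have hfin : (Prod.mk r.1 ⁻¹' S ∩ Iic r.2).Finite :=
    ((hcol r hr).preimage (Prod.mk_right_injective r.1).injOn).subset
      fun _ hd ↦ ⟨hd.1, rfl, hd.2⟩
  exact bddBelow_of_finite_inter_Iic hfin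

end Order

theorem MotivicallyFiniteType.of_finite_inter_Iic {S : Set (ℤ × ℤ)}
    (h : ∀ p ∈ S, (S ∩ Iic p).Finite) : MotivicallyFiniteType S := by
  intro p hp
  refine (h p hp).subset ?_
  rintro q ⟨hqS, hfst, hweight⟩
  have hsnd : q.2 ≤ p.2 := by linarith
  exact ⟨hqS, hfst, hsnd⟩

/-- If the first coordinates of the members of a set `S` of bidegrees are
bounded below, and for each `(a, b) ∈ S` only finitely many `(c, d) ∈ S`
satisfy `c = a` and `d ≤ b`, then `S` is motivically finite type. -/
theorem motivicallyFiniteType_of_bddBelow_of_col_finite (S : Set (ℤ × ℤ))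
    (h1 : ∃ B : ℤ, ∀ q ∈ S, B ≤ q.1)
    (h2 : ∀ p ∈ S, {q : ℤ × ℤ | q ∈ S ∧ q.1 = p.1 ∧ q.2 ≤ p.2}.Finite) :
    MotivicallyFiniteType S := by
  have hfst : BddBelow (Prod.fst '' S) := h1.imp fun _ hB ↦ forall_mem_image.2 hB
  exact .of_finite_inter_Iic fun p _ ↦
    motivicallyFiniteType_of_bddBelow_of_col_finite_general hfst h2 p
end
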